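/- arXiv:1607.08283 — 2 statements merged into one kernel-verified Lean document; each statement's English description precedes it below -/
import Mathlib

section
/- Let ρ : ℤ^n → ℂ be a function and let T_ρ(t) = ∑_{0 ≤ x_1 ≤ t_1} … ∑_{0 ≤ x_n ≤ t_n} ρ(x). Then for any n-times continuously differentiable function f : ℝ^n → ℂ and any N = (N_1,…,N_n) with N_i positive integers, one has ∑_{0 ≤ x_i ≤ N_i (1≤i≤n)} f(x) ρ(x) = ∑_{ε ∈ {0,1}^n} ( ∏_{1≤i≤n} (−1)^{ε_i} N_i^{ε_i − 1} ) ∫_{[0,N_1]} … ∫_{[0,N_n]} ∂^ε f( N_{ε̄} + t_ε ) · T_ρ( N_{ε̄} + t_ε ) dt_n … dt_1, where ∂^ε f = ∂^{ε_1+…+ε_n} f / (∂x_1^{ε_1} … ∂x_n^{ε_n}), N_{ε̄} is the vector whose i-th coordinate equals N_i if ε_i = 0 and 0 if ε_i = 1, and t_ε is the vector whose i-th coordinate equals 0 if ε_i = 0 and t_i if ε_i = 1. -/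
open scoped BigOperators
open MeasureTheory

noncomputable section

/-- The mixed partial derivative `∂^ε f` of `f : ℝ^n → ℂ`, taken once in each
coordinate direction `i` with `ε i = true`. -/
def mixedPartial {n : ℕ} (ε : Fin n → Bool) (f : (Fin n → ℝ) → ℂ) : (Fin n → ℝ) → ℂ :=
  (List.finRange n).foldr
    (fun i g => if ε i then (fun x => fderiv ℝ g x (Pi.single i 1)) else g) f

/-- `T_ρ(t) = ∑_{0 ≤ x_1 ≤ t_1} ⋯ ∑_{0 ≤ x_n ≤ t_n} ρ(x)`. -/
def Trho {n : ℕ} (ρ : (Fin n → ℤ) → ℂ) (t : Fin n → ℝ) : ℂ :=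
  ∑ x ∈ Finset.Icc (0 : Fin n → ℤ) (fun i => ⌊t i⌋), ρ x

/-- The point `N_ε̄ + t_ε`: its `i`-th coordinate is `t i` if `ε i` holds and `N i` otherwise. -/
def mixedPoint {n : ℕ} (ε : Fin n → Bool) (N t : Fin n → ℝ) : Fin n → ℝ :=
  fun i => if ε i then t i else N i

theorem continuous_mixedPoint {n : ℕ} (ε : Fin n → Bool) (N : Fin n → ℝ) :
    Continuous (mixedPoint ε N) := by
  refine continuous_pi fun i => ?_
  unfold mixedPoint
  split_ifs <;> fun_prop

theorem mixedPoint_cons {n : ℕ} (b : Bool) (ε : Fin n → Bool) (N : Fin (n + 1) → ℝ) (s : ℝ)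
    (y : Fin n → ℝ) :
    mixedPoint (Fin.cons b ε : Fin (n + 1) → Bool) N (Fin.cons s y : Fin (n + 1) → ℝ) =
      (Fin.cons (if b then s else N 0) (mixedPoint ε (Fin.tail N) y) : Fin (n + 1) → ℝ) := by
  funext i
  refine Fin.cases ?_ (fun j => ?_) i <;> simp [mixedPoint, Fin.tail]

/-- Iterated partial derivatives in the coordinates `σ i` with `ε i`, for `i` in a list. -/
def listPartial {ι : Type*} {m : ℕ} (σ : ι → Fin m) (ε : ι → Bool) (l : List ι)
    (f : (Fin m → ℝ) → ℂ) : (Fin m → ℝ) → ℂ :=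
  l.foldr (fun i g => if ε i then (fun x => fderiv ℝ g x (Pi.single (σ i) 1)) else g) f

theorem contDiff_listPartial {ι : Type*} {m : ℕ} (σ : ι → Fin m) (ε : ι → Bool) (l : List ι)
    (f : (Fin m → ℝ) → ℂ) (k : ℕ) (hf : ContDiff ℝ (k + l.length : ℕ) f) :
    ContDiff ℝ k (listPartial σ ε l f) := by
  induction l generalizing k with
  | nil => simpa [listPartial] using hf
  | cons i l ih =>
    have h : ContDiff ℝ (k + 1 : ℕ) (listPartial σ ε l f) := by
      refine ih (k + 1) ?_
      convert hf using 2
      simp only [List.length_cons]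
      omega
    change ContDiff ℝ k (if ε i then
      (fun x => fderiv ℝ (listPartial σ ε l f) x (Pi.single (σ i) 1)) else listPartial σ ε l f)
    split_ifs
    · exact (h.fderiv_right (m := k) (by norm_cast)).clm_apply contDiff_const
    · exact h.of_le (by exact_mod_cast Nat.le_succ k)

theorem mixedPartial_cons {n : ℕ} (b : Bool) (ε : Fin n → Bool) (f : (Fin (n + 1) → ℝ) → ℂ) :
    mixedPartial (Fin.cons b ε : Fin (n + 1) → Bool) f =
      if b then fun x => fderiv ℝ (listPartial Fin.succ ε (List.finRange n) f) x (Pi.single 0 1)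
      else listPartial Fin.succ ε (List.finRange n) f := by
  simp only [mixedPartial, listPartial, List.finRange_succ, List.foldr_cons, List.foldr_map,
    Fin.cons_zero, Fin.cons_succ]

theorem hasFDerivAt_cons_right {n : ℕ} (s : ℝ) (y : Fin n → ℝ) :
    HasFDerivAt (fun y : Fin n → ℝ => (Fin.cons s y : Fin (n + 1) → ℝ))
      ((0 : (Fin n → ℝ) →L[ℝ] ℝ).finCons (ContinuousLinearMap.id ℝ (Fin n → ℝ))) y :=
  (hasFDerivAt_const s y).finCons (hasFDerivAt_id y)

theorem hasDerivAt_cons_left {n : ℕ} (s : ℝ) (y : Fin n → ℝ) :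
    HasDerivAt (fun s : ℝ => (Fin.cons s y : Fin (n + 1) → ℝ)) (Pi.single 0 1) s := by
  refine hasDerivAt_pi.2 fun i => ?_
  refine Fin.cases ?_ (fun j => ?_) i
  · simpa using! hasDerivAt_id' s
  · simpa using hasDerivAt_const s (y j)

theorem listPartial_succ_cons {n : ℕ} (ε : Fin n → Bool) (l : List (Fin n))
    (f : (Fin (n + 1) → ℝ) → ℂ) (hf : ContDiff ℝ (l.length : ℕ) f) (s : ℝ) (y : Fin n → ℝ) :
    listPartial Fin.succ ε l f (Fin.cons s y) =
      listPartial id ε l (fun z : Fin n → ℝ => f (Fin.cons s z)) y := by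
  induction l generalizing y with
  | nil => rfl
  | cons i l ih =>
    have ih' := ih (hf.of_le (by simp))
    have hd : Differentiable ℝ (listPartial Fin.succ ε l f) :=
      (contDiff_listPartial Fin.succ ε l f 1 (by simpa [add_comm] using hf)).differentiable
        (by simp)
    change (if ε i then
      (fun x => fderiv ℝ (listPartial Fin.succ ε l f) x (Pi.single i.succ 1)) else
        listPartial Fin.succ ε l f) (Fin.cons s y) = (if ε i then
      (fun x => fderiv ℝ (listPartial id ε l (fun z : Fin n → ℝ => f (Fin.cons s z))) x
        (Pi.single i 1)) else listPartial id ε l (fun z : Fin n → ℝ => f (Fin.cons s z))) y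
    split_ifs
    · have hc := ((hd (Fin.cons s y)).hasFDerivAt.comp y (hasFDerivAt_cons_right s y))
      have he : listPartial id ε l (fun z : Fin n → ℝ => f (Fin.cons s z)) =
          listPartial Fin.succ ε l f ∘ fun z : Fin n → ℝ => (Fin.cons s z : Fin (n + 1) → ℝ) :=
        funext fun z => (ih' z).symm
      simp only [he, hc.fderiv, ContinuousLinearMap.comp_apply]
      congr 1
      funext j
      refine Fin.cases ?_ (fun j => ?_) j
      · simp [Fin.consEquivL, Fin.consLinearEquiv]
      · simp [Fin.consEquivL, Fin.consLinearEquiv, Pi.single_apply]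
    · exact ih' y

theorem setIntegral_Icc_cons {n : ℕ} (a b : Fin (n + 1) → ℝ) (F : (Fin (n + 1) → ℝ) → ℂ)
    (hF : IntegrableOn F (Set.Icc a b)) :
    ∫ t in Set.Icc a b, F t =
      ∫ y in Set.Icc (Fin.tail a) (Fin.tail b), ∫ s in Set.Icc (a 0) (b 0),
        F (Fin.cons s y) := by
  let e := (MeasurableEquiv.piFinSuccAbove (fun _ : Fin (n + 1) => ℝ) 0).symm
  have he : MeasurePreserving e :=
    (volume_preserving_piFinSuccAbove (fun _ : Fin (n + 1) => ℝ) 0).symm _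
  have hcons (p : ℝ × (Fin n → ℝ)) : e p = Fin.cons p.1 p.2 := by
    simp [e, MeasurableEquiv.piFinSuccAbove, Fin.insertNthEquiv]
  have hpre : e ⁻¹' Set.Icc a b =
      Set.Icc (a 0) (b 0) ×ˢ Set.Icc (Fin.tail a) (Fin.tail b) := by
    ext p
    simp only [Set.mem_preimage, hcons, Set.mem_prod, Set.mem_Icc, Pi.le_def, Fin.forall_fin_succ,
      Fin.cons_zero, Fin.cons_succ, Fin.tail]
    tauto
  have hint := (he.integrableOn_comp_preimage e.measurableEmbedding).2 hF
  rw [hpre, Measure.volume_eq_prod, IntegrableOn, ← Measure.prod_restrict] at hint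
  rw [← he.setIntegral_preimage_emb e.measurableEmbedding, hpre, Measure.volume_eq_prod,
    ← Measure.prod_restrict]
  refine (integral_prod_symm _ hint).trans ?_
  simp only [Function.comp_apply, hcons]

theorem integral_partial_summation_one (φ φ' : ℝ → ℂ) (hφ : ∀ s, HasDerivAt φ (φ' s) s)
    (hφ' : Continuous φ') (a N : ℝ) (ha : 0 ≤ a) (haN : a ≤ N) (hN : 0 < N) :
    ∫ s in Set.Icc 0 N, ((N : ℂ)⁻¹ * φ N - (Set.Ici a).indicator φ' s) = φ a := by
  have hi : IntegrableOn ((Set.Ici a).indicator φ') (Set.Icc 0 N) :=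
    hφ'.integrableOn_Icc.indicator measurableSet_Ici
  have hinter : Set.Icc 0 N ∩ Set.Ici a = Set.Icc a N := by
    ext s
    simp only [Set.mem_inter_iff, Set.mem_Icc, Set.mem_Ici]
    constructor
    · rintro ⟨⟨_, h⟩, h'⟩
      exact ⟨h', h⟩
    · rintro ⟨h, h'⟩
      exact ⟨⟨ha.trans h, h'⟩, h⟩
  have hN' : (N : ℂ) ≠ 0 := by exact_mod_cast hN.ne'
  rw [integral_sub (integrable_const _) hi, setIntegral_indicator measurableSet_Ici, hinter,
    integral_Icc_eq_integral_Ioc (x := a), ← intervalIntegral.integral_of_le haN,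
    intervalIntegral.integral_eq_sub_of_hasDerivAt (fun s _ => hφ s)
      (hφ'.intervalIntegrable _ _)]
  simp [hN.le, hN']

theorem integrableOn_indicator_mixedPoint {n : ℕ} (ε : Fin n → Bool) (a N : Fin n → ℝ)
    (G : (Fin n → ℝ) → ℂ) (hG : Continuous G) :
    IntegrableOn (fun t => (Set.Ici a).indicator G (mixedPoint ε N t)) (Set.Icc 0 N) := by
  have h : IntegrableOn (G ∘ mixedPoint ε N) (Set.Icc 0 N) :=
    (hG.comp (continuous_mixedPoint ε N)).integrableOn_Icc
  exact h.indicator ((continuous_mixedPoint ε N).measurable measurableSet_Ici)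

theorem indicator_Ici_cons {n : ℕ} (a : Fin (n + 1) → ℝ) (G : (Fin (n + 1) → ℝ) → ℂ) (s : ℝ)
    (y : Fin n → ℝ) :
    (Set.Ici a).indicator G (Fin.cons s y) =
      (Set.Ici (Fin.tail a)).indicator
        (fun z : Fin n → ℝ => (Set.Ici (a 0)).indicator (fun r => G (Fin.cons r z)) s) y := by
  classical
  simp only [Set.indicator_apply, Set.mem_Ici, Pi.le_def, Fin.forall_fin_succ, Fin.cons_zero,
    Fin.cons_succ, Fin.tail]
  split_ifs <;> tauto

theorem continuous_mixedPartial {n : ℕ} (ε : Fin n → Bool) (f : (Fin n → ℝ) → ℂ)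
    (hf : ContDiff ℝ n f) : Continuous (mixedPartial ε f) :=
  (contDiff_listPartial id ε (List.finRange n) f 0 (by simpa using hf)).continuous

/-- Combining the two terms of the partial summation formula that differ only in the first
coordinate. -/
theorem mixedPartial_integral_step {n : ℕ} (ε : Fin n → Bool) (f : (Fin (n + 1) → ℝ) → ℂ)
    (hf : ContDiff ℝ (n + 1 : ℕ) f) (a N : Fin (n + 1) → ℝ) (ha : 0 ≤ a) (haN : a ≤ N)
    (hN : ∀ i, 0 < N i) :
    ((N 0 : ℝ) : ℂ)⁻¹ * (∫ t in Set.Icc 0 N, (Set.Ici a).indicator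
        (mixedPartial (Fin.cons false ε : Fin (n + 1) → Bool) f)
        (mixedPoint (Fin.cons false ε : Fin (n + 1) → Bool) N t)) -
      (∫ t in Set.Icc 0 N, (Set.Ici a).indicator
        (mixedPartial (Fin.cons true ε : Fin (n + 1) → Bool) f)
        (mixedPoint (Fin.cons true ε : Fin (n + 1) → Bool) N t)) =
      ∫ y in Set.Icc 0 (Fin.tail N), (Set.Ici (Fin.tail a)).indicator
        (mixedPartial ε (fun z : Fin n → ℝ => f (Fin.cons (a 0) z)))
        (mixedPoint ε (Fin.tail N) y) := by
  have hint (b : Bool) := integrableOn_indicator_mixedPoint (Fin.cons b ε : Fin (n + 1) → Bool)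
    a N _ (continuous_mixedPartial (Fin.cons b ε : Fin (n + 1) → Bool) f hf)
  have hG : ContDiff ℝ 1 (listPartial Fin.succ ε (List.finRange n) f) :=
    contDiff_listPartial Fin.succ ε (List.finRange n) f 1 (by simpa [add_comm] using hf)
  have hG' : Continuous fun x =>
      fderiv ℝ (listPartial Fin.succ ε (List.finRange n) f) x (Pi.single 0 1) :=
    (hG.continuous_fderiv (by simp)).clm_apply continuous_const
  rw [← integral_const_mul, ← integral_sub ((hint false).const_mul _) (hint true)]
  refine (setIntegral_Icc_cons _ _ _ (((hint false).const_mul _).sub (hint true))).trans ?_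
  refine setIntegral_congr_fun measurableSet_Icc fun y _ => ?_
  have hmp (z : Fin n → ℝ) : mixedPartial ε (fun z : Fin n → ℝ => f (Fin.cons (a 0) z)) z =
      listPartial Fin.succ ε (List.finRange n) f (Fin.cons (a 0) z) :=
    (listPartial_succ_cons ε _ f (hf.of_le (by simp)) (a 0) z).symm
  simp only [Pi.sub_apply, mixedPoint_cons, mixedPartial_cons, indicator_Ici_cons,
    if_true, Bool.false_eq_true, if_false]
  by_cases hy : mixedPoint ε (Fin.tail N) y ∈ Set.Ici (Fin.tail a)
  · simp only [Set.indicator_of_mem hy, hmp, Set.indicator_of_mem (Set.mem_Ici.2 (haN 0))]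
    refine integral_partial_summation_one
      (fun s => listPartial Fin.succ ε (List.finRange n) f
        (Fin.cons s (mixedPoint ε (Fin.tail N) y))) _ (fun s => ?_) ?_ _ _ (ha 0) (haN 0) (hN 0)
    · exact ((hG.differentiable (by simp)) _).hasFDerivAt.comp_hasDerivAt s
        (hasDerivAt_cons_left s _)
    · exact hG'.comp
        (continuous_iff_continuousAt.2 fun s => (hasDerivAt_cons_left s _).continuousAt)
  · simp [Set.indicator_of_notMem hy]

/-- Pointwise form of partial summation: the value of `f` at a point of the box. -/
theorem eq_sum_integral_mixedPartial {n : ℕ} (f : (Fin n → ℝ) → ℂ) (hf : ContDiff ℝ n f)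
    (a N : Fin n → ℝ) (ha : 0 ≤ a) (haN : a ≤ N) (hN : ∀ i, 0 < N i) :
    ∑ ε : Fin n → Bool, (∏ i, if ε i then (-1 : ℂ) else ((N i : ℝ) : ℂ)⁻¹) *
      ∫ t in Set.Icc 0 N, (Set.Ici a).indicator (mixedPartial ε f) (mixedPoint ε N t) = f a := by
  induction n with
  | zero =>
    have hIcc : Set.Icc 0 N = Set.univ := Set.eq_univ_of_forall fun x => by
      constructor <;> exact fun i => i.elim0
    have hval (ε : Fin 0 → Bool) (t : Fin 0 → ℝ) : mixedPartial ε f t = f a := by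
      rw [Subsingleton.elim t a]
      simp [mixedPartial]
    rw [hIcc]
    simp [hval, measureReal_def, volume_pi]
  | succ n ih =>
    rw [← (Fin.consEquiv fun _ : Fin (n + 1) => Bool).sum_comp, Fintype.sum_prod_type_right]
    have hfa : ContDiff ℝ n fun z : Fin n → ℝ => f (Fin.cons (a 0) z) := by
      refine (hf.of_le (by simp)).comp (contDiff_pi.2 fun i => ?_)
      refine Fin.cases ?_ (fun j => ?_) i
      · simpa using contDiff_const
      · simpa using contDiff_apply ℝ ℝ j
    have h := ih (fun z : Fin n → ℝ => f (Fin.cons (a 0) z)) hfa (Fin.tail a) (Fin.tail N)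
      (fun i => ha i.succ) (fun i => haN i.succ) (fun i => hN i.succ)
    rw [Fin.cons_self_tail] at h
    rw [← h]
    refine Finset.sum_congr rfl fun ε _ => ?_
    rw [← mixedPartial_integral_step ε f hf a N ha haN hN, Fintype.sum_bool]
    simp only [Fin.consEquiv, Equiv.coe_fn_mk, Fin.prod_univ_succ, Fin.cons_zero,
      Fin.cons_succ, if_true, Bool.false_eq_true, if_false, Fin.tail]
    ring

theorem Trho_eq_sum_indicator {n : ℕ} (ρ : (Fin n → ℤ) → ℂ) (N : Fin n → ℕ) (t : Fin n → ℝ)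
    (ht : ∀ i, t i ≤ N i) :
    Trho ρ t = ∑ x ∈ Finset.Icc (0 : Fin n → ℤ) (fun i => (N i : ℤ)),
      (Set.Ici fun i => (x i : ℝ)).indicator (fun _ => ρ x) t := by
  classical
  simp only [Trho, Set.indicator_apply, ← Finset.sum_filter]
  refine Finset.sum_congr ?_ fun _ _ => rfl
  ext x
  simp only [Finset.mem_Icc, Finset.mem_filter, Set.mem_Ici, Pi.le_def, Int.le_floor]
  constructor
  · rintro ⟨h, h'⟩
    exact ⟨⟨h, fun i => by exact_mod_cast (h' i).trans (ht i)⟩, h'⟩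
  · rintro ⟨⟨h, _⟩, h'⟩
    exact ⟨h, h'⟩

/-- **Lemma (multidimensional partial summation).** For `ε ∈ {0,1}^n`, the point
`N_ε̄ + t_ε` has `i`-th coordinate `t i` if `ε i = 1` and `N i` if `ε i = 0`. -/
theorem multidimensional_partial_summation
    (n : ℕ) (ρ : (Fin n → ℤ) → ℂ) (f : (Fin n → ℝ) → ℂ) (hf : ContDiff ℝ n f)
    (N : Fin n → ℕ) (hN : ∀ i, 0 < N i) :
    ∑ x ∈ Finset.Icc (0 : Fin n → ℤ) (fun i => (N i : ℤ)),
        f (fun i => (x i : ℝ)) * ρ x =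
      ∑ ε : Fin n → Bool,
        (∏ i, if ε i then (-1 : ℂ) else (((N i : ℝ) : ℂ))⁻¹) *
          ∫ t in Set.Icc (0 : Fin n → ℝ) (fun i => (N i : ℝ)),
            mixedPartial ε f (fun i => if ε i then t i else (N i : ℝ)) *
              Trho ρ (fun i => if ε i then t i else (N i : ℝ)) := by
  classical
  have hpoint (x : Fin n → ℤ) (hx : x ∈ Finset.Icc (0 : Fin n → ℤ) (fun i => (N i : ℤ))) :=
    eq_sum_integral_mixedPartial f hf (fun i => (x i : ℝ)) (fun i => (N i : ℝ))
      (fun i => Int.cast_nonneg ((Finset.mem_Icc.1 hx).1 i))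
      (fun i => (Int.cast_le.2 ((Finset.mem_Icc.1 hx).2 i)).trans_eq (Int.cast_natCast _))
      (fun i => by exact_mod_cast hN i)
  rw [Finset.sum_congr rfl fun x hx => by rw [← hpoint x hx, Finset.sum_mul], Finset.sum_comm]
  refine Finset.sum_congr rfl fun ε _ => ?_
  simp only [mul_assoc]
  rw [← Finset.mul_sum]
  congr 1
  simp only [← integral_mul_const]
  rw [← integral_finsetSum _ fun x _ => (integrableOn_indicator_mixedPoint ε _ _ _
    (continuous_mixedPartial ε f hf)).mul_const _]
  refine setIntegral_congr_fun measurableSet_Icc fun t ht => ?_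
  change _ = mixedPartial ε f (mixedPoint ε _ t) * Trho ρ (mixedPoint ε _ t)
  rw [Trho_eq_sum_indicator ρ N, Finset.mul_sum]
  · refine Finset.sum_congr rfl fun x _ => ?_
    simp only [Set.indicator_apply]
    split_ifs <;> simp
  · intro i
    unfold mixedPoint
    split_ifs
    · exact ht.2 i
    · exact le_rfl

end
end

section
/- Let M be an invertible r × r matrix with rational entries and let ε₀ > 0. Suppose γ = (γ_1,…,γ_r) ∈ ℝ^r is such that there exist integers a_1,…,a_r and q_1,…,q_r with gcd(a_j, q_j) = 1, 0 < q_j ≤ P^{C'} and |γ_j − a_j/q_j| ≤ P^{C'−1} for each 1 ≤ j ≤ r, where C' > 0. Then, provided P is sufficiently large with respect to M, r, C' and ε₀, the vector α = M^{-1} γ admits a simultaneous rational approximation with common denominator: there exist q' ∈ ℕ and integers a'_1,…,a'_r such that q' ≤ P^{rC' + ε₀} and |α_j − a'_j/q'| ≤ P^{rC' + ε₀ − 1} for each 1 ≤ j ≤ r. -/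
open scoped BigOperators
open Matrix

noncomputable section

/-- Inverting an invertible rational matrix commutes with casting its entries to `ℝ`. -/
lemma map_ratCast_inv {n : Type*} [Fintype n] [DecidableEq n] (M : Matrix n n ℚ)
    (hM : IsUnit M.det) :
    (M.map ((↑) : ℚ → ℝ))⁻¹ = M⁻¹.map ((↑) : ℚ → ℝ) := by
  refine Matrix.inv_eq_right_inv ?_
  have h := Matrix.map_mul (L := M) (M := M⁻¹) (f := Rat.castHom ℝ)
  rw [Matrix.mul_nonsing_inv M hM] at h
  simpa using h.symm

/-- The entries of a finite rational matrix have a common denominator. -/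
lemma exists_common_den {m n : Type*} [Fintype m] [Fintype n] (N : Matrix m n ℚ) :
    ∃ D : ℕ, 0 < D ∧ ∃ A : m → n → ℤ, ∀ i j, (D : ℝ) * (N i j : ℝ) = A i j := by
  refine ⟨∏ i, ∏ j, (N i j).den,
    Finset.prod_pos fun i _ => Finset.prod_pos fun j _ => (N i j).den_pos, ?_⟩
  have h : ∀ i j, ∃ z : ℤ, ((∏ i, ∏ j, (N i j).den : ℕ) : ℝ) * (N i j : ℝ) = z := by
    intro i j
    obtain ⟨c, hc⟩ : (N i j).den ∣ ∏ i, ∏ j, (N i j).den :=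
      (Finset.dvd_prod_of_mem (fun j => (N i j).den) (Finset.mem_univ j)).trans
        (Finset.dvd_prod_of_mem (fun i => ∏ j, (N i j).den) (Finset.mem_univ i))
    refine ⟨c * (N i j).num, ?_⟩
    have hnum : ((N i j).den : ℝ) * (N i j : ℝ) = (N i j).num := by
      exact_mod_cast Rat.den_mul_eq_num (N i j)
    rw [hc]
    push_cast
    rw [← hnum]
    ring
  choose A hA using h
  exact ⟨A, hA⟩

/-- **Lemma (simultaneous rational approximation under an invertible rational linear
change of coordinates).** -/
theorem rational_approx_invertible_matrix
    (r : ℕ) (M : Matrix (Fin r) (Fin r) ℚ) (hM : IsUnit M.det)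
    (C' : ℝ) (hC' : 0 < C') (ε₀ : ℝ) (hε₀ : 0 < ε₀) :
    ∃ P₀ : ℝ, ∀ P : ℝ, P₀ ≤ P → ∀ γ : Fin r → ℝ,
      (∀ j : Fin r, ∃ a : ℤ, ∃ q : ℤ, Int.gcd a q = 1 ∧ 0 < q ∧ (q : ℝ) ≤ P ^ C' ∧
        |γ j - (a : ℝ) / (q : ℝ)| ≤ P ^ (C' - 1)) →
      ∃ q' : ℕ, 0 < q' ∧ (q' : ℝ) ≤ P ^ ((r : ℝ) * C' + ε₀) ∧
        ∃ a' : Fin r → ℤ, ∀ j : Fin r,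
          |((M.map ((↑) : ℚ → ℝ))⁻¹ *ᵥ γ) j - (a' j : ℝ) / (q' : ℝ)| ≤
            P ^ ((r : ℝ) * C' + ε₀ - 1) := by
  rw [map_ratCast_inv M hM]
  set N := M⁻¹
  obtain ⟨D, hD, A, hA⟩ := exists_common_den N
  set K : ℝ := ∑ i, ∑ j, |(N i j : ℝ)|
  obtain ⟨P₀, hP₀⟩ := Filter.eventually_atTop.1
    ((Filter.eventually_ge_atTop (1 : ℝ)).and
      (((tendsto_rpow_atTop hε₀).eventually_ge_atTop (D : ℝ)).and
        ((tendsto_rpow_atTop hε₀).eventually_ge_atTop K)))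
  refine ⟨P₀, fun P hP γ hγ => ?_⟩
  obtain ⟨hP1, hPD, hPK⟩ := hP₀ P hP
  have hPpos : 0 < P := by linarith
  choose a q _ hq0 hqP hγq using hγ
  have hqpos : ∀ j, (0 : ℝ) < q j := fun j => by exact_mod_cast hq0 j
  have hQpos : (0 : ℝ) < ∏ j, (q j : ℝ) := Finset.prod_pos fun j _ => hqpos j
  have hDpos : (0 : ℝ) < D := by exact_mod_cast hD
  have hcast : ((D * ∏ j, (q j).toNat : ℕ) : ℝ) = D * ∏ j, (q j : ℝ) := by
    push_cast
    congr 1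
    refine Finset.prod_congr rfl fun j _ => ?_
    exact_mod_cast Int.toNat_of_nonneg (hq0 j).le
  refine ⟨D * ∏ j, (q j).toNat, ?_, ?_,
    fun i => ∑ j, A i j * a j * ∏ k ∈ Finset.univ.erase j, q k, fun i => ?_⟩
  · have := mul_pos hDpos hQpos
    rw [← hcast] at this
    exact_mod_cast this
  · rw [hcast, add_comm, Real.rpow_add hPpos]
    have hQ : ∏ j, (q j : ℝ) ≤ P ^ ((r : ℝ) * C') := by
      calc ∏ j, (q j : ℝ) ≤ ∏ _j : Fin r, P ^ C' :=
            Finset.prod_le_prod (fun j _ => (hqpos j).le) fun j _ => hqP j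
        _ = P ^ ((r : ℝ) * C') := by
            rw [Finset.prod_const, Finset.card_univ, Fintype.card_fin, mul_comm,
              Real.rpow_mul_natCast hPpos.le]
    gcongr
  · have hfrac : ((∑ j, A i j * a j * ∏ k ∈ Finset.univ.erase j, q k : ℤ) : ℝ) /
        (D * ∏ j, (q j : ℝ)) = ∑ j, (N i j : ℝ) * (a j / q j) := by
      push_cast
      rw [Finset.sum_div]
      refine Finset.sum_congr rfl fun j _ => ?_
      have hR : (0 : ℝ) < ∏ k ∈ Finset.univ.erase j, (q k : ℝ) :=
        Finset.prod_pos fun k _ => hqpos k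
      rw [← hA, ← Finset.mul_prod_erase _ _ (Finset.mem_univ j)]
      have := hqpos j
      field_simp
    have hr : (1 : ℝ) ≤ r := by exact_mod_cast i.pos
    rw [hcast, hfrac]
    simp only [Matrix.mulVec, dotProduct, Matrix.map_apply]
    rw [← Finset.sum_sub_distrib]
    calc |∑ j, ((N i j : ℝ) * γ j - (N i j : ℝ) * (a j / q j))|
        ≤ ∑ j, |(N i j : ℝ) * γ j - (N i j : ℝ) * (a j / q j)| := Finset.abs_sum_le_sum_abs _ _
      _ ≤ ∑ j, |(N i j : ℝ)| * P ^ (C' - 1) := by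
          refine Finset.sum_le_sum fun j _ => ?_
          rw [← mul_sub, abs_mul]
          exact mul_le_mul_of_nonneg_left (hγq j) (abs_nonneg _)
      _ = (∑ j, |(N i j : ℝ)|) * P ^ (C' - 1) := by rw [Finset.sum_mul]
      _ ≤ P ^ ε₀ * P ^ (C' - 1) := by
          gcongr
          refine le_trans ?_ hPK
          exact Finset.single_le_sum (f := fun i => ∑ j, |(N i j : ℝ)|)
            (fun i _ => Finset.sum_nonneg fun j _ => abs_nonneg _) (Finset.mem_univ i)
      _ = P ^ (ε₀ + (C' - 1)) := (Real.rpow_add hPpos _ _).symm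
      _ ≤ P ^ ((r : ℝ) * C' + ε₀ - 1) :=
          Real.rpow_le_rpow_of_exponent_le hP1 (by nlinarith)

end
end
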